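/- arXiv:2603.26381 — 10 statements merged into one kernel-verified Lean document; each statement's English description precedes it below -/
import Mathlib

section
/- Let (E_k)_{k≥0} be a sequence of nonnegative real numbers with E_1 = E_0, and let a_1, a_2 be real numbers with a_2 ≥ 0, a_1 + a_2 < 1, and at least one of a_1, a_2 positive. If E_{k+1} ≤ a_1 E_k + a_2 E_{k−1} for all k ≥ 1, then for all k ≥ 1 one has E_{k+1} ≤ q^k (1 + ξ) E_0, where q := (a_1 + √(a_1² + 4 a_2))/2 and ξ := q − a_1. -/
/-- Lemma 3.5 (recurrence estimate): if a nonnegative sequence satisfies the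
two-term recurrence inequality with `a₂ ≥ 0`, `a₁ + a₂ < 1` and at least one of
`a₁, a₂` positive, then it decays like `q^k (1 + ξ) E₀`. -/
theorem stmt0 (E : ℕ → ℝ) (hEnonneg : ∀ k, 0 ≤ E k) (hE10 : E 1 = E 0)
    (a1 a2 : ℝ) (ha2 : 0 ≤ a2) (hsum : a1 + a2 < 1) (hpos : 0 < a1 ∨ 0 < a2)
    (hrec : ∀ k, 1 ≤ k → E (k + 1) ≤ a1 * E k + a2 * E (k - 1)) :
    ∀ k, 1 ≤ k →
      E (k + 1) ≤
        ((a1 + Real.sqrt (a1 ^ 2 + 4 * a2)) / 2) ^ k *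
          (1 + ((a1 + Real.sqrt (a1 ^ 2 + 4 * a2)) / 2 - a1)) * E 0 := by
  have hs : Real.sqrt (a1 ^ 2 + 4 * a2) ^ 2 = a1 ^ 2 + 4 * a2 :=
    Real.sq_sqrt (by positivity)
  have habs : |a1| ≤ Real.sqrt (a1 ^ 2 + 4 * a2) :=
    Real.abs_le_sqrt (by linarith)
  obtain ⟨h1, h2⟩ := abs_le.mp habs
  generalize Real.sqrt (a1 ^ 2 + 4 * a2) = s at *
  obtain ⟨q, hq⟩ : ∃ q, q = (a1 + s) / 2 := ⟨_, rfl⟩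
  rw [← hq]
  have hq0 : 0 ≤ q := by linarith
  have hx0 : 0 ≤ q - a1 := by linarith
  have hqx : q * (q - a1) = a2 := by rw [hq]; linarith
  have key : ∀ k, E (k + 1) + (q - a1) * E k ≤ q ^ k * (1 + (q - a1)) * E 0 := by
    intro k
    induction k with
    | zero => simp only [zero_add, hE10, pow_zero]; linarith
    | succ n ih =>
      have hr := hrec (n + 1) (by omega)
      simp only [Nat.add_sub_cancel] at hr
      have hm := mul_le_mul_of_nonneg_left ih hq0
      rw [← hqx] at hr
      rw [pow_succ]
      linarith
  intro k _
  have := key k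
  have := mul_nonneg hx0 (hEnonneg k)
  linarith
end

section
/- Let (E_k)_{k≥0} be a sequence of nonnegative real numbers with E_1 = E_0, let a_1, a_2, a_3 be real numbers with a_2 ≥ 0, a_1 + a_2 < 1, at least one of a_1, a_2 positive, and a_3 > 0, and let c : ℕ → Bool be a choice function such that for every k ≥ 1: if c(k) = false then E_{k+1} ≤ a_1 E_k + a_2 E_{k−1}, and if c(k) = true then E_{k+1} ≤ a_3 E_k. For k ≥ 1 let t_k denote the number of indices j with 1 ≤ j ≤ k and c(j) = true. Then for all k ≥ 1, E_{k+1} ≤ q^{k − t_k} (a_3 + ξ)^{t_k} (1 + ξ) E_0, where q := (a_1 + √(a_1² + 4 a_2))/2 and ξ := q − a_1. -/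
/-- Hybrid recurrence estimate: a nonnegative sequence which at each step `k ≥ 1`
satisfies either the two-term recurrence inequality (when `c k = false`) or the
one-step contraction (when `c k = true`) obeys
`E_{k+1} ≤ q^{k-t_k} (a₃+ξ)^{t_k} (1+ξ) E₀`, where `t_k` counts the one-step cases. -/
theorem stmt2 (E : ℕ → ℝ) (hEnonneg : ∀ k, 0 ≤ E k) (hE10 : E 1 = E 0)
    (a1 a2 a3 : ℝ) (ha2 : 0 ≤ a2) (hsum : a1 + a2 < 1) (hpos : 0 < a1 ∨ 0 < a2)
    (ha3 : 0 < a3) (c : ℕ → Bool)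
    (hrecF : ∀ k, 1 ≤ k → c k = false → E (k + 1) ≤ a1 * E k + a2 * E (k - 1))
    (hrecT : ∀ k, 1 ≤ k → c k = true → E (k + 1) ≤ a3 * E k) :
    ∀ k, 1 ≤ k →
      E (k + 1) ≤
        ((a1 + Real.sqrt (a1 ^ 2 + 4 * a2)) / 2) ^
            (k - ((Finset.Icc 1 k).filter (fun j => c j = true)).card) *
          (a3 + ((a1 + Real.sqrt (a1 ^ 2 + 4 * a2)) / 2 - a1)) ^
            ((Finset.Icc 1 k).filter (fun j => c j = true)).card *
          (1 + ((a1 + Real.sqrt (a1 ^ 2 + 4 * a2)) / 2 - a1)) * E 0 := by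
  have hs0 : 0 ≤ Real.sqrt (a1 ^ 2 + 4 * a2) := Real.sqrt_nonneg _
  have hs2 : Real.sqrt (a1 ^ 2 + 4 * a2) ^ 2 = a1 ^ 2 + 4 * a2 :=
    Real.sq_sqrt (by positivity)
  have habs : |a1| ≤ Real.sqrt (a1 ^ 2 + 4 * a2) := Real.abs_le_sqrt (by linarith)
  have hb := abs_le.mp habs
  generalize hq : (a1 + Real.sqrt (a1 ^ 2 + 4 * a2)) / 2 = q
  have hq0 : 0 ≤ q := by rw [← hq]; linarith [hb.1]
  have hx0 : 0 ≤ q - a1 := by rw [← hq]; linarith [hb.2]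
  have hqx : q * (q - a1) = a2 := by rw [← hq]; linear_combination hs2 / 4
  generalize hx : q - a1 = x at *
  have key : ∀ k, E (k + 1) + x * E k ≤
      q ^ (k - ((Finset.Icc 1 k).filter (fun j => c j = true)).card) *
        (a3 + x) ^ ((Finset.Icc 1 k).filter (fun j => c j = true)).card * (1 + x) * E 0 := by
    intro k
    induction k with
    | zero => simp [hE10]; linarith
    | succ k ih =>
      have hcard : ((Finset.Icc 1 k).filter (fun j => c j = true)).card ≤ k := by
        simpa using Finset.card_filter_le (Finset.Icc 1 k) (fun j => c j = true)
      have hins : Finset.Icc 1 (k + 1) = insert (k + 1) (Finset.Icc 1 k) := by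
        ext j; simp only [Finset.mem_Icc, Finset.mem_insert]; omega
      rw [hins, Finset.filter_insert]
      cases hc : c (k + 1) with
      | false =>
        have h := hrecF (k + 1) (by omega) hc
        simp only [Nat.add_sub_cancel] at h
        have h2 := mul_le_mul_of_nonneg_left ih hq0
        simp only [Bool.false_eq_true, if_false]
        rw [Nat.succ_sub hcard, pow_succ]
        have h3 : a1 * E (k + 1) + a2 * E k + x * E (k + 1) = q * (E (k + 1) + x * E k) := by
          rw [← hqx, ← hx]; ring
        linarith
      | true =>
        have h := hrecT (k + 1) (by omega) hc
        have h2 := mul_le_mul_of_nonneg_left ih (by linarith : 0 ≤ a3 + x)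
        have h3 : 0 ≤ (a3 + x) * (x * E k) :=
          mul_nonneg (by linarith) (mul_nonneg hx0 (hEnonneg k))
        simp only [if_true]
        rw [Finset.card_insert_of_notMem (by simp), Nat.add_sub_add_right, pow_succ]
        linarith
  intro k _
  have := key k
  have := mul_nonneg hx0 (hEnonneg k)
  linarith
end

section
/- Let F : ℝⁿ → ℝᵐ have components F_1,…,F_m each differentiable on an open set containing the closed ball B := {x : ‖x − x₀‖ ≤ δ} (δ > 0), and suppose F satisfies the local tangential cone condition with constant η ∈ [0, 1) on B. Then for every nonempty index set J ⊆ {1,…,m} and all x, x̃ ∈ B: (1/(1+η)) ‖F'_J(x)(x − x̃)‖ ≤ ‖F_J(x) − F_J(x̃)‖ ≤ (1/(1−η)) ‖F'_J(x)(x − x̃)‖, where the norms are Euclidean norms on ℝ^J. -/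
open scoped RealInnerProductSpace

theorem aux_sqrt {m : ℕ} (J : Finset (Fin m)) (a b : Fin m → ℝ) (c : ℝ) (hc : 0 ≤ c)
    (h : ∀ i ∈ J, |a i| ≤ c * |b i|) :
    Real.sqrt (∑ i ∈ J, a i ^ 2) ≤ c * Real.sqrt (∑ i ∈ J, b i ^ 2) := by
  have h1 : ∑ i ∈ J, a i ^ 2 ≤ c ^ 2 * ∑ i ∈ J, b i ^ 2 := by
    rw [Finset.mul_sum]
    refine Finset.sum_le_sum fun i hi => ?_
    rw [← sq_abs (a i), ← sq_abs (b i), ← mul_pow]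
    exact pow_le_pow_left₀ (abs_nonneg _) (h i hi) 2
  refine (Real.sqrt_le_sqrt h1).trans (le_of_eq ?_)
  rw [Real.sqrt_mul (sq_nonneg c), Real.sqrt_sq hc]

/-- Under the local tangential cone condition with constant `η ∈ [0,1)` on the
closed ball `B(x₀, δ)`, for every nonempty block `J` and `x, y ∈ B`:
`(1/(1+η)) ‖F'_J(x)(x-y)‖ ≤ ‖F_J(x) - F_J(y)‖ ≤ (1/(1-η)) ‖F'_J(x)(x-y)‖`. -/
theorem stmt3 {n m : ℕ} (x₀ : EuclideanSpace ℝ (Fin n)) (δ : ℝ) (hδ : 0 < δ)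
    (f : Fin m → EuclideanSpace ℝ (Fin n) → ℝ)
    (g : Fin m → EuclideanSpace ℝ (Fin n) → EuclideanSpace ℝ (Fin n))
    (hdiff : ∀ i, ∀ x ∈ Metric.closedBall x₀ δ, HasGradientAt (f i) (g i x) x)
    (η : ℝ) (hη0 : 0 ≤ η) (hη1 : η < 1)
    (hcone : ∀ i, ∀ x ∈ Metric.closedBall x₀ δ, ∀ y ∈ Metric.closedBall x₀ δ,
      |f i x - f i y - ⟪g i x, x - y⟫| ≤ η * |f i x - f i y|)
    (J : Finset (Fin m)) (hJ : J.Nonempty)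
    (x : EuclideanSpace ℝ (Fin n)) (hx : x ∈ Metric.closedBall x₀ δ)
    (y : EuclideanSpace ℝ (Fin n)) (hy : y ∈ Metric.closedBall x₀ δ) :
    (1 / (1 + η)) * Real.sqrt (∑ i ∈ J, ⟪g i x, x - y⟫ ^ 2) ≤
        Real.sqrt (∑ i ∈ J, (f i x - f i y) ^ 2) ∧
      Real.sqrt (∑ i ∈ J, (f i x - f i y) ^ 2) ≤
        (1 / (1 - η)) * Real.sqrt (∑ i ∈ J, ⟪g i x, x - y⟫ ^ 2) := by
  have h1 : 0 < 1 + η := by linarith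
  have h2 : 0 < 1 - η := by linarith
  constructor
  · rw [one_div, inv_mul_le_iff₀ h1]
    refine aux_sqrt J _ _ _ h1.le fun i _ => ?_
    have hc := hcone i x hx y hy
    have ht := abs_sub_abs_le_abs_sub (⟪g i x, x - y⟫) (f i x - f i y)
    rw [abs_sub_comm (⟪g i x, x - y⟫)] at ht
    linarith
  · refine aux_sqrt J _ _ _ (by positivity) fun i _ => ?_
    rw [one_div, le_inv_mul_iff₀ h2]
    have hc := hcone i x hx y hy
    have ht := abs_sub_abs_le_abs_sub (f i x - f i y) (⟪g i x, x - y⟫)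
    linarith
end

section
/- Let F : ℝⁿ → ℝᵐ have components F_1,…,F_m each differentiable on an open set containing the closed ball B := {x : ‖x − x₀‖ ≤ δ} (δ > 0), and suppose F satisfies the local tangential cone condition with constant η ∈ [0, 1) on B. Let x_*, x† ∈ B satisfy F(x_*) = 0 and F(x†) = 0, and suppose x_* − x₀ is orthogonal to the kernel of F'(x_*) (i.e. ⟨x_* − x₀, v⟩ = 0 for every v with F'(x_*)v = 0). Then ‖x† − x₀‖² = ‖x† − x_*‖² + ‖x_* − x₀‖²; in particular, if x† ≠ x_* then ‖x† − x₀‖ > ‖x_* − x₀‖, so x_* is the unique solution of F(x) = 0 in B of minimal distance to x₀ with this orthogonality property. -/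
open scoped RealInnerProductSpace

/-- If `x⋆` and `x†` are both zeros of `F` in the ball and `x⋆ - x₀` is orthogonal
to the kernel of `F'(x⋆)`, then `‖x† - x₀‖² = ‖x† - x⋆‖² + ‖x⋆ - x₀‖²`; in
particular `x⋆` is the unique zero of minimal distance to `x₀` with this
orthogonality property. -/
theorem stmt6 {n m : ℕ} (x₀ : EuclideanSpace ℝ (Fin n)) (δ : ℝ) (hδ : 0 < δ)
    (f : Fin m → EuclideanSpace ℝ (Fin n) → ℝ)
    (g : Fin m → EuclideanSpace ℝ (Fin n) → EuclideanSpace ℝ (Fin n))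
    (hdiff : ∀ i, ∀ x ∈ Metric.closedBall x₀ δ, HasGradientAt (f i) (g i x) x)
    (η : ℝ) (hη0 : 0 ≤ η) (hη1 : η < 1)
    (hcone : ∀ i, ∀ x ∈ Metric.closedBall x₀ δ, ∀ y ∈ Metric.closedBall x₀ δ,
      |f i x - f i y - ⟪g i x, x - y⟫| ≤ η * |f i x - f i y|)
    (xstar : EuclideanSpace ℝ (Fin n)) (hxstar : xstar ∈ Metric.closedBall x₀ δ)
    (xdag : EuclideanSpace ℝ (Fin n)) (hxdag : xdag ∈ Metric.closedBall x₀ δ)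
    (hFstar : ∀ i, f i xstar = 0) (hFdag : ∀ i, f i xdag = 0)
    (horth : ∀ v : EuclideanSpace ℝ (Fin n),
      (∀ i, ⟪g i xstar, v⟫ = 0) → ⟪xstar - x₀, v⟫ = 0) :
    ‖xdag - x₀‖ ^ 2 = ‖xdag - xstar‖ ^ 2 + ‖xstar - x₀‖ ^ 2 ∧
      (xdag ≠ xstar → ‖xstar - x₀‖ < ‖xdag - x₀‖) := by
  have h1 : ⟪xstar - x₀, xstar - xdag⟫ = 0 := by
    apply horth
    intro i
    have h := hcone i xstar hxstar xdag hxdag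
    rw [hFstar, hFdag] at h
    simpa using h
  have h2 : ⟪xdag - xstar, xstar - x₀⟫ = 0 := by
    rw [real_inner_comm, ← neg_sub xstar xdag, inner_neg_right, h1, neg_zero]
  have h3 : ‖xdag - x₀‖ ^ 2 = ‖xdag - xstar‖ ^ 2 + ‖xstar - x₀‖ ^ 2 := by
    rw [← sub_add_sub_cancel xdag xstar x₀, norm_add_sq_real, h2]
    ring
  refine ⟨h3, fun hne => ?_⟩
  have h4 : 0 < ‖xdag - xstar‖ := norm_pos_iff.mpr (sub_ne_zero.mpr hne)
  apply lt_of_pow_lt_pow_left₀ 2 (norm_nonneg _)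
  rw [h3]
  have := pow_pos h4 2
  linarith
end

section
/- Let F : ℝⁿ → ℝᵐ have components F_1,…,F_m each differentiable on the open ball B° := {x : ‖x − x₀‖ < δ} (δ > 0), suppose F satisfies the local tangential cone condition with constant η ∈ [0, 1) on B°, and suppose there exists x_* ∈ B° with F(x_*) = 0. Then for each i ∈ {1,…,m}: F_i(x) = 0 for all x ∈ B° if and only if there exists x̃ ∈ B° such that ∇F_i(x̃) = 0. -/
open scoped RealInnerProductSpace

/-- Under the local tangential cone condition with `η ∈ [0,1)` on the open ball,
assuming a zero of `F` exists in the ball: a component `F_i` vanishes identically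
on the ball iff its gradient vanishes at some point of the ball. -/
theorem stmt7 {n m : ℕ} (x₀ : EuclideanSpace ℝ (Fin n)) (δ : ℝ) (hδ : 0 < δ)
    (f : Fin m → EuclideanSpace ℝ (Fin n) → ℝ)
    (g : Fin m → EuclideanSpace ℝ (Fin n) → EuclideanSpace ℝ (Fin n))
    (hdiff : ∀ i, ∀ x ∈ Metric.ball x₀ δ, HasGradientAt (f i) (g i x) x)
    (η : ℝ) (hη0 : 0 ≤ η) (hη1 : η < 1)
    (hcone : ∀ i, ∀ x ∈ Metric.ball x₀ δ, ∀ y ∈ Metric.ball x₀ δ,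
      |f i x - f i y - ⟪g i x, x - y⟫| ≤ η * |f i x - f i y|)
    (hsol : ∃ xstar ∈ Metric.ball x₀ δ, ∀ i, f i xstar = 0) :
    ∀ i, (∀ x ∈ Metric.ball x₀ δ, f i x = 0) ↔
      ∃ y ∈ Metric.ball x₀ δ, g i y = 0 := by
  intro i
  constructor
  · intro h
    have hx : x₀ ∈ Metric.ball x₀ δ := Metric.mem_ball_self hδ
    refine ⟨x₀, hx, ?_⟩
    have h0 : HasGradientAt (f i) 0 x₀ := by
      refine (hasGradientAt_const x₀ (0 : ℝ)).congr_of_eventuallyEq ?_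
      filter_upwards [Metric.ball_mem_nhds x₀ hδ] with x hx
      exact h x hx
    exact (hdiff i x₀ hx).unique h0
  · rintro ⟨y, hy, hg⟩
    have key : ∀ x ∈ Metric.ball x₀ δ, f i x = f i y := by
      intro x hx
      have h := hcone i y hy x hx
      rw [hg, inner_zero_left, sub_zero] at h
      have h2 : |f i y - f i x| = 0 := by
        have := abs_nonneg (f i y - f i x)
        nlinarith
      have h3 := abs_eq_zero.mp h2
      linarith
    obtain ⟨z, hz, hz0⟩ := hsol
    intro x hx
    rw [key x hx, ← key z hz, hz0 i]
end

section
/- Let G : ℝⁿ → ℝᵐ be differentiable at a point a ∈ ℝⁿ with derivative A := G'(a) (a continuous linear map ℝⁿ → ℝᵐ), let x_* ∈ ℝⁿ satisfy G(x_*) = 0, and let η ∈ [0, 1/2) be such that ‖G(a) − A(a − x_*)‖ ≤ η ‖G(a)‖. Let b ∈ ℝⁿ, set v := a − b and u := A^*(G(a)) (the adjoint of A applied to G(a)), and assume Δ := ‖u‖²‖v‖² − ⟨u, v⟩² > 0. Let β := ⟨v, u⟩ ‖G(a)‖² / Δ and assume β ≥ 0, let s := Δ/(‖u‖²‖v‖²)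 ∈ (0, 1], let σ := ‖A‖ be the operator norm of A, and define x⁺ := a − (‖v‖² ‖G(a)‖² / Δ) u + β v. Then ‖x⁺ − x_*‖² ≤ (1 + 3β + 2β²) ‖a − x_*‖² + (2β² + β) ‖b − x_*‖² − (1 − 2η + (1 − s)/s) · ‖G(a)‖² / (σ² s). -/
open scoped RealInnerProductSpace

/-- One-step error estimate for the average block nonlinear Kaczmarz iterate with
adaptive momentum (Lemma 3.7 of the paper). -/
theorem stmt10 {n m : ℕ}
    (G : EuclideanSpace ℝ (Fin n) → EuclideanSpace ℝ (Fin m))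
    (a : EuclideanSpace ℝ (Fin n))
    (A : EuclideanSpace ℝ (Fin n) →L[ℝ] EuclideanSpace ℝ (Fin m))
    (hA : HasFDerivAt G A a)
    (xstar : EuclideanSpace ℝ (Fin n)) (hxstar : G xstar = 0)
    (η : ℝ) (hη0 : 0 ≤ η) (hη : η < 1 / 2)
    (hcone : ‖G a - A (a - xstar)‖ ≤ η * ‖G a‖)
    (b : EuclideanSpace ℝ (Fin n))
    (v u : EuclideanSpace ℝ (Fin n))
    (hv : v = a - b) (hu : u = ContinuousLinearMap.adjoint A (G a))
    (Δ : ℝ) (hΔdef : Δ = ‖u‖ ^ 2 * ‖v‖ ^ 2 - ⟪u, v⟫ ^ 2) (hΔ : 0 < Δ)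
    (β : ℝ) (hβdef : β = ⟪v, u⟫ * ‖G a‖ ^ 2 / Δ) (hβ : 0 ≤ β)
    (s : ℝ) (hs : s = Δ / (‖u‖ ^ 2 * ‖v‖ ^ 2))
    (σ : ℝ) (hσ : σ = ‖A‖)
    (xplus : EuclideanSpace ℝ (Fin n))
    (hxplus : xplus = a - (‖v‖ ^ 2 * ‖G a‖ ^ 2 / Δ) • u + β • v) :
    ‖xplus - xstar‖ ^ 2 ≤
      (1 + 3 * β + 2 * β ^ 2) * ‖a - xstar‖ ^ 2 +
        (2 * β ^ 2 + β) * ‖b - xstar‖ ^ 2 -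
        (1 - 2 * η + (1 - s) / s) * ‖G a‖ ^ 2 / (σ ^ 2 * s) := by
  have hp : ⟪v, u⟫ = ⟪u, v⟫ := real_inner_comm _ _
  have hUle : ‖u‖ ^ 2 ≤ σ ^ 2 * ‖G a‖ ^ 2 := by
    have h1 : ‖u‖ ≤ σ * ‖G a‖ := by
      rw [hu, hσ]
      have h2 := (ContinuousLinearMap.adjoint A).le_opNorm (G a)
      rwa [LinearIsometryEquiv.norm_map] at h2
    calc ‖u‖ ^ 2 ≤ (σ * ‖G a‖) ^ 2 := by gcongr
      _ = _ := by ring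
  have hue : (1 - η) * ‖G a‖ ^ 2 ≤ ⟪u, a - xstar⟫ := by
    rw [hu, ContinuousLinearMap.adjoint_inner_left]
    have h1 : ⟪G a, G a - A (a - xstar)⟫ ≤ ‖G a‖ * (η * ‖G a‖) :=
      (real_inner_le_norm _ _).trans (by gcongr)
    rw [inner_sub_right, real_inner_self_eq_norm_sq] at h1
    linarith
  have hexp : ‖xplus - xstar‖ ^ 2 = ‖a - xstar‖ ^ 2
      + (‖v‖ ^ 2 * ‖G a‖ ^ 2 / Δ) ^ 2 * ‖u‖ ^ 2 + β ^ 2 * ‖v‖ ^ 2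
      - 2 * (‖v‖ ^ 2 * ‖G a‖ ^ 2 / Δ) * ⟪u, a - xstar⟫ + 2 * β * ⟪v, a - xstar⟫
      - 2 * (‖v‖ ^ 2 * ‖G a‖ ^ 2 / Δ) * β * ⟪u, v⟫ := by
    generalize ‖v‖ ^ 2 * ‖G a‖ ^ 2 / Δ = α at *
    have h1 : xplus - xstar = (a - xstar) - α • u + β • v := by rw [hxplus]; abel
    rw [h1]
    generalize a - xstar = e
    simp only [← real_inner_self_eq_norm_sq, inner_add_left, inner_add_right, inner_sub_left,
      inner_sub_right, real_inner_smul_left, real_inner_smul_right]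
    rw [real_inner_comm u e, real_inner_comm v e, real_inner_comm u v]
    ring
  have hb : ‖b - xstar‖ ^ 2 = ‖a - xstar‖ ^ 2 - 2 * ⟪v, a - xstar⟫ + ‖v‖ ^ 2 := by
    have h1 : b - xstar = (a - xstar) - v := by rw [hv]; abel
    rw [h1, norm_sub_sq_real, real_inner_comm]
  have hV2 : ‖v‖ ^ 2 ≤ 2 * ‖a - xstar‖ ^ 2 + 2 * ‖b - xstar‖ ^ 2 := by
    have h1 : v = (a - xstar) - (b - xstar) := by rw [hv]; abel
    have h2 := parallelogram_law_with_norm ℝ (a - xstar) (b - xstar)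
    rw [← h1] at h2
    nlinarith [mul_self_nonneg ‖a - xstar + (b - xstar)‖]
  rw [hp] at hβdef
  have hUV : 0 < ‖u‖ ^ 2 * ‖v‖ ^ 2 := by nlinarith [sq_nonneg (⟪u, v⟫)]
  have hU : 0 < ‖u‖ ^ 2 := by
    rcases (sq_nonneg ‖u‖).lt_or_eq with h | h
    · exact h
    · rw [← h] at hUV; simp at hUV
  have hV : 0 < ‖v‖ ^ 2 := pos_of_mul_pos_right hUV hU.le
  have hσ2 : 0 < σ ^ 2 := by
    rcases (sq_nonneg σ).lt_or_eq with h | h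
    · exact h
    · rw [← h] at hUle; linarith
  clear hA hcone hxstar hxplus hv hu hσ hp
  generalize ‖G a‖ ^ 2 = g at *
  generalize ‖xplus - xstar‖ ^ 2 = X at *
  generalize ‖a - xstar‖ ^ 2 = E at *
  generalize ‖b - xstar‖ ^ 2 = F at *
  generalize ⟪u, a - xstar⟫ = ue at *
  generalize ⟪v, a - xstar⟫ = ve at *
  generalize ‖u‖ ^ 2 = U at *
  generalize ‖v‖ ^ 2 = V at *
  generalize ⟪u, v⟫ = p at *
  generalize σ ^ 2 = S at *
  have hg : 0 < g := by
    by_contra hg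
    nlinarith
  have hs1 : (1 - s) / s = p ^ 2 / Δ := by
    have h0 : 1 - s = p ^ 2 / (U * V) := by
      rw [hs]; field_simp; linarith
    rw [h0, hs]; field_simp
  have hs2 : g / (S * s) ≤ g ^ 2 * V / Δ := by
    have h0 : g / (S * s) = g * V / Δ * (U / S) := by rw [hs]; field_simp
    have h1 : U / S ≤ g := by rw [div_le_iff₀ hσ2]; linarith
    rw [h0]
    calc g * V / Δ * (U / S) ≤ g * V / Δ * g := by gcongr
      _ = _ := by ring
  have hK : 0 ≤ 1 - 2 * η + p ^ 2 / Δ := by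
    have : 0 ≤ p ^ 2 / Δ := by positivity
    linarith
  have hfin : (1 - 2 * η + (1 - s) / s) * g / (S * s) ≤
      (1 - 2 * η) * (g ^ 2 * V / Δ) + β ^ 2 * V := by
    rw [hs1, mul_div_assoc]
    refine (mul_le_mul_of_nonneg_left hs2 hK).trans (le_of_eq ?_)
    rw [hβdef]; field_simp
  have hquad : (V * g / Δ) ^ 2 * U + β ^ 2 * V - 2 * (V * g / Δ) * β * p = g ^ 2 * V / Δ := by
    rw [hβdef]; field_simp; rw [hΔdef]; ring
  have hue2 : (V * g / Δ) * ((1 - η) * g) ≤ (V * g / Δ) * ue :=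
    mul_le_mul_of_nonneg_left hue (by positivity)
  have e1 : (V * g / Δ) * ((1 - η) * g) = (1 - η) * (g ^ 2 * V / Δ) := by ring
  have hβV := mul_le_mul_of_nonneg_left hV2 hβ
  have hβV2 := mul_le_mul_of_nonneg_left hV2 (sq_nonneg β)
  have hve : 2 * β * ve = β * E + β * V - β * F := by rw [hb]; ring
  rw [e1] at hue2
  linarith
end

section
/- Let G : ℝⁿ → ℝᵐ be differentiable at a ∈ ℝⁿ with derivative A := G'(a), let x_* ∈ ℝⁿ satisfy G(x_*) = 0, let η ∈ (0, 1/2), γ ∈ (0, 1], K ≥ 1, β_max > 0, and σ := ‖A‖ (operator norm). Assume: ‖G(a) − A(a − x_*)‖ ≤ η ‖G(a)‖; ‖G(a)‖² ≥ ‖A(a − x_*)‖²/(1 + η²); ‖A(a − x_*)‖² ≥ (σ²/K²) ‖a − x_*‖². Let b ∈ ℝⁿ, v := a − b, u := A^*(G(a)), assume Δ := ‖u‖²‖v‖² − ⟨u, v⟩² > 0 and s := Δ/(‖u‖²‖v‖²) ≤ γ, let β := ⟨v, u⟩ ‖G(a)‖²/Δ and assume 0 ≤ β ≤ β_max, and set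 x⁺ := a − (‖v‖² ‖G(a)‖²/Δ) u + β v. Then ‖x⁺ − x_*‖² ≤ b₁ ‖a − x_*‖² + b₂ ‖b − x_*‖², where b₁ := 1 + 3β_max + 2β_max² − (1 − 2ηγ)/((1 + η²) K² γ²) and b₂ := 2β_max² + β_max. -/
open scoped RealInnerProductSpace

set_option maxHeartbeats 1000000

theorem helper_T1 (V R D U : ℝ) (hD : 0 < D) (hU : 0 < U) (hV : 0 < V) :
    (V * R / D) * R = (R ^ 2 / U) / (D / (U * V)) := by
  field_simp

theorem helper_T2 (V R D U : ℝ) (hD : 0 < D) (hU : 0 < U) (hV : 0 < V) :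
    (U * V - D) * R ^ 2 / D ^ 2 * V
      = (1 - D / (U * V)) * (R ^ 2 / U) / (D / (U * V)) ^ 2 := by
  field_simp

theorem helper_scalar (V R D U p : ℝ) (hD : 0 < D) (hDd : D = U * V - p ^ 2) :
    (V * R / D) ^ 2 * U - 2 * (p * R / D) * (V * R / D) * p + (p * R / D) ^ 2 * V
      = (V * R / D) * R := by
  have h : (V * R / D) ^ 2 * U - 2 * (p * R / D) * (V * R / D) * p + (p * R / D) ^ 2 * V
      = V * R ^ 2 * (U * V - p ^ 2) / D ^ 2 := by ring
  rw [h, ← hDd]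
  field_simp

theorem helper_expand {E : Type*} [NormedAddCommGroup E] [InnerProductSpace ℝ E]
    (e u v : E) (R D β : ℝ) (hDd : D = ‖u‖ ^ 2 * ‖v‖ ^ 2 - ⟪u, v⟫ ^ 2) (hD : 0 < D)
    (hβ : β = ⟪v, u⟫ * R / D) :
    ‖e - (‖v‖ ^ 2 * R / D) • u + β • v‖ ^ 2 = ‖e‖ ^ 2
      - 2 * (‖v‖ ^ 2 * R / D) * ⟪u, e⟫ + 2 * β * ⟪v, e⟫ + (‖v‖ ^ 2 * R / D) * R := by
  have h := helper_scalar (‖v‖ ^ 2) R D (‖u‖ ^ 2) (⟪u, v⟫) hD hDd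
  rw [real_inner_comm] at hβ
  rw [← hβ] at h
  rw [← h]
  generalize ‖v‖ ^ 2 * R / D = α
  rw [norm_add_sq_real, norm_sub_sq_real, inner_sub_left, real_inner_smul_left,
    real_inner_smul_right, real_inner_smul_right, real_inner_smul_right,
    norm_smul, norm_smul, mul_pow, mul_pow,
    Real.norm_eq_abs, Real.norm_eq_abs, sq_abs, sq_abs,
    real_inner_comm e u, real_inner_comm e v]
  ring

/-- One-step contraction estimate for the adaptive-momentum average block
nonlinear Kaczmarz iterate under the tangential cone and condition-number
bounds: `‖x⁺ - x⋆‖² ≤ b₁ ‖a - x⋆‖² + b₂ ‖b - x⋆‖²`. -/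
theorem stmt11 {n m : ℕ}
    (G : EuclideanSpace ℝ (Fin n) → EuclideanSpace ℝ (Fin m))
    (a : EuclideanSpace ℝ (Fin n))
    (A : EuclideanSpace ℝ (Fin n) →L[ℝ] EuclideanSpace ℝ (Fin m))
    (hA : HasFDerivAt G A a)
    (xstar : EuclideanSpace ℝ (Fin n)) (hxstar : G xstar = 0)
    (η γ K βmax : ℝ) (hη0 : 0 < η) (hη : η < 1 / 2)
    (hγ0 : 0 < γ) (hγ1 : γ ≤ 1) (hK : 1 ≤ K) (hβmax : 0 < βmax)
    (σ : ℝ) (hσ : σ = ‖A‖)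
    (hcone : ‖G a - A (a - xstar)‖ ≤ η * ‖G a‖)
    (hlow : ‖A (a - xstar)‖ ^ 2 / (1 + η ^ 2) ≤ ‖G a‖ ^ 2)
    (hsv : (σ ^ 2 / K ^ 2) * ‖a - xstar‖ ^ 2 ≤ ‖A (a - xstar)‖ ^ 2)
    (b : EuclideanSpace ℝ (Fin n))
    (v u : EuclideanSpace ℝ (Fin n))
    (hv : v = a - b) (hu : u = ContinuousLinearMap.adjoint A (G a))
    (Δ : ℝ) (hΔdef : Δ = ‖u‖ ^ 2 * ‖v‖ ^ 2 - ⟪u, v⟫ ^ 2) (hΔ : 0 < Δ)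
    (s : ℝ) (hs : s = Δ / (‖u‖ ^ 2 * ‖v‖ ^ 2)) (hsγ : s ≤ γ)
    (β : ℝ) (hβdef : β = ⟪v, u⟫ * ‖G a‖ ^ 2 / Δ)
    (hβ0 : 0 ≤ β) (hββ : β ≤ βmax)
    (xplus : EuclideanSpace ℝ (Fin n))
    (hxplus : xplus = a - (‖v‖ ^ 2 * ‖G a‖ ^ 2 / Δ) • u + β • v) :
    ‖xplus - xstar‖ ^ 2 ≤
      (1 + 3 * βmax + 2 * βmax ^ 2 - (1 - 2 * η * γ) / ((1 + η ^ 2) * K ^ 2 * γ ^ 2)) *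
          ‖a - xstar‖ ^ 2 +
        (2 * βmax ^ 2 + βmax) * ‖b - xstar‖ ^ 2 := by
  have hNpos : 0 < ‖u‖ ^ 2 * ‖v‖ ^ 2 := by nlinarith [sq_nonneg (⟪u, v⟫)]
  have hu2 : 0 < ‖u‖ ^ 2 := by
    rcases (sq_nonneg ‖u‖).lt_or_eq with h | h
    · exact h
    · rw [← h] at hNpos; simp at hNpos
  have hv2 : 0 < ‖v‖ ^ 2 := by
    rcases (sq_nonneg ‖v‖).lt_or_eq with h | h
    · exact h
    · rw [← h] at hNpos; simp at hNpos
  have hspos : 0 < s := by rw [hs]; positivity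
  -- the norm of u
  have hun : ‖u‖ ^ 2 ≤ σ ^ 2 * ‖G a‖ ^ 2 := by
    have h1 : ‖u‖ ≤ σ * ‖G a‖ := by
      have := (ContinuousLinearMap.adjoint A).le_opNorm (G a)
      rw [LinearIsometryEquiv.norm_map] at this
      rw [hu, hσ]; exact this
    calc ‖u‖ ^ 2 ≤ (σ * ‖G a‖) ^ 2 := by gcongr
      _ = _ := by ring
  -- the inner product of u with the error
  have hue : (1 - η) * ‖G a‖ ^ 2 ≤ ⟪u, a - xstar⟫ := by
    have h1 : ⟪u, a - xstar⟫ = ‖G a‖ ^ 2 - ⟪G a, G a - A (a - xstar)⟫ := by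
      rw [hu, ContinuousLinearMap.adjoint_inner_left, inner_sub_right,
        real_inner_self_eq_norm_sq]
      ring
    have h2 := real_inner_le_norm (G a) (G a - A (a - xstar))
    have h3 := mul_le_mul_of_nonneg_left hcone (norm_nonneg (G a))
    rw [h1]; nlinarith
  have hve : 2 * ⟪v, a - xstar⟫ ≤ 3 * ‖a - xstar‖ ^ 2 + ‖b - xstar‖ ^ 2 := by
    have h1 : v = (a - xstar) - (b - xstar) := by rw [hv]; abel
    have h2 := norm_add_sq_real (b - xstar) (a - xstar)
    rw [h1, inner_sub_left, real_inner_self_eq_norm_sq]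
    nlinarith [sq_nonneg ‖b - xstar + (a - xstar)‖]
  have hvn : ‖v‖ ^ 2 ≤ 2 * ‖a - xstar‖ ^ 2 + 2 * ‖b - xstar‖ ^ 2 := by
    have h1 : v = (a - xstar) - (b - xstar) := by rw [hv]; abel
    have h2 := norm_add_sq_real (a - xstar) (b - xstar)
    have h3 := norm_sub_sq_real (a - xstar) (b - xstar)
    rw [h1]
    nlinarith [sq_nonneg ‖a - xstar + (b - xstar)‖]
  have hexp : ‖xplus - xstar‖ ^ 2 = ‖a - xstar‖ ^ 2
      - 2 * (‖v‖ ^ 2 * ‖G a‖ ^ 2 / Δ) * ⟪u, a - xstar⟫ + 2 * β * ⟪v, a - xstar⟫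
      + (‖v‖ ^ 2 * ‖G a‖ ^ 2 / Δ) * ‖G a‖ ^ 2 := by
    have h1 : xplus - xstar = (a - xstar) - (‖v‖ ^ 2 * ‖G a‖ ^ 2 / Δ) • u + β • v := by
      rw [hxplus]; abel
    rw [h1]
    exact helper_expand _ u v _ Δ β hΔdef hΔ hβdef
  have hT1 : (‖v‖ ^ 2 * ‖G a‖ ^ 2 / Δ) * ‖G a‖ ^ 2 = ((‖G a‖ ^ 2) ^ 2 / ‖u‖ ^ 2) / s := by
    rw [hs]; exact helper_T1 _ _ _ _ hΔ hu2 hv2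
  have hT2 : β ^ 2 * ‖v‖ ^ 2 = (1 - s) * ((‖G a‖ ^ 2) ^ 2 / ‖u‖ ^ 2) / s ^ 2 := by
    have h1 : ⟪v, u⟫ ^ 2 = ‖u‖ ^ 2 * ‖v‖ ^ 2 - Δ := by
      rw [hΔdef, real_inner_comm]; ring
    have h2 : β ^ 2 = (‖u‖ ^ 2 * ‖v‖ ^ 2 - Δ) * (‖G a‖ ^ 2) ^ 2 / Δ ^ 2 := by
      rw [hβdef, div_pow, mul_pow, h1]
    rw [h2, hs]; exact helper_T2 _ _ _ _ hΔ hu2 hv2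
  have hα : 0 ≤ ‖v‖ ^ 2 * ‖G a‖ ^ 2 / Δ := by positivity
  set α := ‖v‖ ^ 2 * ‖G a‖ ^ 2 / Δ with hαdef
  set T := (‖G a‖ ^ 2) ^ 2 / ‖u‖ ^ 2 with hTdef
  have hE : ‖a - xstar‖ ^ 2 / ((1 + η ^ 2) * K ^ 2) ≤ T := by
    have hR : 0 ≤ ‖G a‖ ^ 2 := by positivity
    have hK0 : 0 < K ^ 2 := by positivity
    have h1 : σ ^ 2 * ‖a - xstar‖ ^ 2 ≤ K ^ 2 * ((1 + η ^ 2) * ‖G a‖ ^ 2) := by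
      rw [div_le_iff₀ (by positivity)] at hlow
      have h4 : (σ ^ 2 / K ^ 2) * ‖a - xstar‖ ^ 2 = σ ^ 2 * ‖a - xstar‖ ^ 2 / K ^ 2 := by ring
      rw [h4, div_le_iff₀ hK0] at hsv
      nlinarith
    rw [hTdef, div_le_div_iff₀ (by positivity) hu2]
    calc ‖a - xstar‖ ^ 2 * ‖u‖ ^ 2 ≤ ‖a - xstar‖ ^ 2 * (σ ^ 2 * ‖G a‖ ^ 2) := by gcongr
      _ = (σ ^ 2 * ‖a - xstar‖ ^ 2) * ‖G a‖ ^ 2 := by ring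
      _ ≤ (K ^ 2 * ((1 + η ^ 2) * ‖G a‖ ^ 2)) * ‖G a‖ ^ 2 := by gcongr
      _ = _ := by ring
  have hfin : (1 - 2 * η * γ) / ((1 + η ^ 2) * K ^ 2 * γ ^ 2) * ‖a - xstar‖ ^ 2
      ≤ (1 - 2 * η * s) * T / s ^ 2 := by
    have hpos : 0 ≤ 1 - 2 * η * γ := by nlinarith
    have hT0 : 0 ≤ T := by rw [hTdef]; positivity
    calc (1 - 2 * η * γ) / ((1 + η ^ 2) * K ^ 2 * γ ^ 2) * ‖a - xstar‖ ^ 2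
        = (1 - 2 * η * γ) * (‖a - xstar‖ ^ 2 / ((1 + η ^ 2) * K ^ 2)) / γ ^ 2 := by
          field_simp
      _ ≤ (1 - 2 * η * γ) * T / γ ^ 2 := by gcongr
      _ ≤ (1 - 2 * η * γ) * T / s ^ 2 := by gcongr
      _ ≤ (1 - 2 * η * s) * T / s ^ 2 := by gcongr
  have hid : (1 - 2 * η * s) * T / s ^ 2 = (1 - 2 * η) * (T / s) + (1 - s) * T / s ^ 2 := by
    field_simp; ring
  rw [hid, ← hT1, ← hT2] at hfin
  have k1 := mul_le_mul_of_nonneg_left hue hα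
  have k2 := mul_le_mul_of_nonneg_left hve hβ0
  have k3 := mul_le_mul_of_nonneg_left hvn (sq_nonneg β)
  have k4 : β * (3 * ‖a - xstar‖ ^ 2 + ‖b - xstar‖ ^ 2)
      ≤ βmax * (3 * ‖a - xstar‖ ^ 2 + ‖b - xstar‖ ^ 2) := by gcongr
  have k5 : β ^ 2 * (2 * ‖a - xstar‖ ^ 2 + 2 * ‖b - xstar‖ ^ 2)
      ≤ βmax ^ 2 * (2 * ‖a - xstar‖ ^ 2 + 2 * ‖b - xstar‖ ^ 2) := by gcongr
  rw [hexp]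
  linarith
end

section
/- Let η ∈ (0, 1/2) and γ ∈ (0, 1]. Let K be a real number with 1 ≤ K and K² < (1 − 2ηγ)(1 + η²)/((1 − 2η² − 4η³) γ²). Define c := (1 − 2ηγ)/((1 + η²) K² γ²) and d := 1 − (1 − 2η)/(1 + η²). Let β_max satisfy 0 < β_max < min{ (√((1 + 3d²)² + 8(1 + d²)(d⁴ + d²c − d²)) − (1 + 3d²))/(4(1 + d²)), (√(1 + c) − 1)/2 }. Define b₁ := 1 + 3β_max + 2β_max² − c, b₂ := 2β_max² + β_max, and q := (b₁ + √(b₁² + 4 b₂))/2. Then b₂ > 0, b₁ + b₂ < 1, and b₁ + b₂ ≤ q < d² < 1. -/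
/-- Arithmetic facts on the constants of Theorem 3.1: `b₂ > 0`, `b₁ + b₂ < 1`
and `b₁ + b₂ ≤ q < d² < 1`. -/
theorem stmt12 (η γ K : ℝ) (hη0 : 0 < η) (hη : η < 1 / 2)
    (hγ0 : 0 < γ) (hγ1 : γ ≤ 1) (hK1 : 1 ≤ K)
    (hK2 : K ^ 2 < (1 - 2 * η * γ) * (1 + η ^ 2) / ((1 - 2 * η ^ 2 - 4 * η ^ 3) * γ ^ 2))
    (c d : ℝ) (hc : c = (1 - 2 * η * γ) / ((1 + η ^ 2) * K ^ 2 * γ ^ 2))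
    (hd : d = 1 - (1 - 2 * η) / (1 + η ^ 2))
    (βmax : ℝ) (hβ0 : 0 < βmax)
    (hβ : βmax < min
      ((Real.sqrt ((1 + 3 * d ^ 2) ^ 2 + 8 * (1 + d ^ 2) * (d ^ 4 + d ^ 2 * c - d ^ 2))
          - (1 + 3 * d ^ 2)) / (4 * (1 + d ^ 2)))
      ((Real.sqrt (1 + c) - 1) / 2))
    (b1 b2 q : ℝ)
    (hb1 : b1 = 1 + 3 * βmax + 2 * βmax ^ 2 - c)
    (hb2 : b2 = 2 * βmax ^ 2 + βmax)
    (hq : q = (b1 + Real.sqrt (b1 ^ 2 + 4 * b2)) / 2) :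
    0 < b2 ∧ b1 + b2 < 1 ∧ b1 + b2 ≤ q ∧ q < d ^ 2 ∧ d ^ 2 < 1 := by
  have hpos : 0 < 1 + η ^ 2 := by positivity
  have hd0 : 0 < d := by
    rw [hd, sub_pos, div_lt_one hpos]; nlinarith
  have hd1 : d < 1 := by
    have : 0 < (1 - 2 * η) / (1 + η ^ 2) := div_pos (by linarith) hpos
    linarith
  obtain ⟨h1, h2⟩ := lt_min_iff.mp hβ
  have hD : 0 < d ^ 2 := by positivity
  have hb2pos : 0 < b2 := by rw [hb2]; positivity
  have hs : b1 + b2 < 1 := by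
    have h3 : 2 * βmax + 1 < Real.sqrt (1 + c) := by linarith
    have h4 := (Real.lt_sqrt (by positivity)).mp h3
    rw [hb1, hb2]; nlinarith
  have hkey : 0 < (d ^ 2) ^ 2 - b1 * d ^ 2 - b2 := by
    rw [lt_div_iff₀ (by positivity)] at h1
    have h3 := (Real.lt_sqrt (x := βmax * (4 * (1 + d ^ 2)) + (1 + 3 * d ^ 2))
      (by positivity)).mp (lt_sub_iff_add_lt.mp h1)
    have h4 : 0 < 8 * (1 + d ^ 2) * ((d ^ 2) ^ 2 - b1 * d ^ 2 - b2) := by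
      rw [hb1, hb2]; linarith
    exact (mul_pos_iff_of_pos_left (by positivity)).mp h4
  have hDb : b1 < d ^ 2 := by
    have : 0 < d ^ 2 * (d ^ 2 - b1) := by linarith
    have := (mul_pos_iff_of_pos_left hD).mp this
    linarith
  refine ⟨hb2pos, hs, ?_, ?_, ?_⟩
  · have : 2 * (b1 + b2) - b1 ≤ Real.sqrt (b1 ^ 2 + 4 * b2) := by
      apply Real.le_sqrt_of_sq_le
      nlinarith [mul_pos hb2pos (sub_pos.mpr hs)]
    rw [hq]; linarith
  · have : Real.sqrt (b1 ^ 2 + 4 * b2) < 2 * d ^ 2 - b1 := by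
      rw [Real.sqrt_lt' (by linarith)]
      linarith
    rw [hq]; linarith
  · nlinarith
end

section
/- Let η ∈ (0, 1/2) and γ ∈ (0, 1]. Let K ≥ 1 satisfy both K² < (1 − 2ηγ)(1 + η²)/((1 − 2η² − 4η³) γ²) and K² < (1 − 2ηγ + (1 − 2η)γ²)/((1 + η²) γ²). Define c := (1 − 2ηγ)/((1 + η²) K² γ²), b₃ := 1 − (1 − 2η)/((1 + η²) K²), and let β_max satisfy 0 < β_max < (√((4 − 3b₃)² + 8(2 − b₃)(1 − b₃)(c − b₃)) − (4 − 3b₃))/(4(2 − b₃)). Define b₁ := 1 + 3β_max + 2β_max² − c, b₂ := 2β_max² + β_max, q := (b₁ + √(b₁² + 4 b₂))/2 and ξ := q − b₁, and assume additionally b₁ ≥ 0. Then c > b₃, 0 < b₃ < 1, ξ ≥ 0, and b₃ + ξ < 1. -/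
/-- Arithmetic facts on the constants of Theorem 3.2: `c > b₃`, `0 < b₃ < 1`,
`ξ ≥ 0` and `b₃ + ξ < 1`. -/
theorem stmt13 (η γ K : ℝ) (hη0 : 0 < η) (hη : η < 1 / 2)
    (hγ0 : 0 < γ) (hγ1 : γ ≤ 1) (hK1 : 1 ≤ K)
    (hK2 : K ^ 2 < (1 - 2 * η * γ) * (1 + η ^ 2) / ((1 - 2 * η ^ 2 - 4 * η ^ 3) * γ ^ 2))
    (hK2' : K ^ 2 < (1 - 2 * η * γ + (1 - 2 * η) * γ ^ 2) / ((1 + η ^ 2) * γ ^ 2))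
    (c b3 : ℝ) (hc : c = (1 - 2 * η * γ) / ((1 + η ^ 2) * K ^ 2 * γ ^ 2))
    (hb3 : b3 = 1 - (1 - 2 * η) / ((1 + η ^ 2) * K ^ 2))
    (βmax : ℝ) (hβ0 : 0 < βmax)
    (hβ : βmax <
      (Real.sqrt ((4 - 3 * b3) ^ 2 + 8 * (2 - b3) * (1 - b3) * (c - b3))
          - (4 - 3 * b3)) / (4 * (2 - b3)))
    (b1 b2 q ξ : ℝ)
    (hb1 : b1 = 1 + 3 * βmax + 2 * βmax ^ 2 - c)
    (hb2 : b2 = 2 * βmax ^ 2 + βmax)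
    (hq : q = (b1 + Real.sqrt (b1 ^ 2 + 4 * b2)) / 2)
    (hξ : ξ = q - b1) (hb1nonneg : 0 ≤ b1) :
    b3 < c ∧ 0 < b3 ∧ b3 < 1 ∧ 0 ≤ ξ ∧ b3 + ξ < 1 := by
  have hKK : 1 ≤ K ^ 2 := by nlinarith
  have hη2 : 0 < η ^ 2 := by positivity
  have hP : 1 < (1 + η ^ 2) * K ^ 2 := by nlinarith
  have hP0 : 0 < (1 + η ^ 2) * K ^ 2 := by linarith
  have hγ2 : 0 < γ ^ 2 := by positivity
  have hd0 : 0 < (1 - 2 * η) / ((1 + η ^ 2) * K ^ 2) := div_pos (by linarith) hP0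
  have hd1 : (1 - 2 * η) / ((1 + η ^ 2) * K ^ 2) < 1 := by
    rw [div_lt_one hP0]; linarith
  have hb30 : 0 < b3 := by linarith
  have hb31 : b3 < 1 := by linarith
  have hcb : b3 < c := by
    rw [lt_div_iff₀ (by positivity)] at hK2'
    have h : c - b3 = ((1 - 2 * η * γ + (1 - 2 * η) * γ ^ 2) - K ^ 2 * ((1 + η ^ 2) * γ ^ 2))
        / ((1 + η ^ 2) * K ^ 2 * γ ^ 2) := by
      rw [hc, hb3]
      have : K ≠ 0 := by linarith
      field_simp
      ring
    have : 0 < c - b3 := by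
      rw [h]
      exact div_pos (by linarith) (by positivity)
    linarith
  have hb2p : 0 < b2 := by rw [hb2]; positivity
  have hs : b1 ≤ Real.sqrt (b1 ^ 2 + 4 * b2) := Real.le_sqrt_of_sq_le (by linarith)
  refine ⟨hcb, hb30, hb31, by linarith, ?_⟩
  have key : b2 < (1 - b3) * (1 - b3 - b1) := by
    rw [lt_div_iff₀ (by linarith)] at hβ
    have h1 : βmax * (4 * (2 - b3)) + (4 - 3 * b3) <
      Real.sqrt ((4 - 3 * b3) ^ 2 + 8 * (2 - b3) * (1 - b3) * (c - b3)) := by linarith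
    have hpos : 0 ≤ βmax * (4 * (2 - b3)) + (4 - 3 * b3) := by
      have : 0 < βmax * (4 * (2 - b3)) := mul_pos hβ0 (by linarith)
      linarith
    rw [Real.lt_sqrt hpos] at h1
    have h2 : 0 < (8 * (2 - b3)) * ((1 - b3) * (1 - b3 - b1) - b2) := by
      rw [hb1, hb2]; nlinarith
    have := (mul_pos_iff_of_pos_left (by linarith : 0 < 8 * (2 - b3))).1 h2
    linarith
  have : Real.sqrt (b1 ^ 2 + 4 * b2) < b1 + 2 * (1 - b3) := by
    rw [Real.sqrt_lt' (by linarith)]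
    have := mul_nonneg (by linarith : 0 ≤ 1 - b3) hb1nonneg
    nlinarith
  linarith
end

section
/- Let G : ℝⁿ → ℝᵐ be differentiable at a ∈ ℝⁿ with derivative A := G'(a), let x_* ∈ ℝⁿ satisfy G(x_*) = 0, let η ∈ [0, 1/2), K ≥ 1, and σ := ‖A‖ (operator norm). Assume: ‖G(a) − A(a − x_*)‖ ≤ η ‖G(a)‖; ‖G(a)‖² ≥ ‖A(a − x_*)‖²/(1 + η²); ‖A(a − x_*)‖² ≥ (σ²/K²) ‖a − x_*‖²; and u := A^*(G(a)) ≠ 0. Define x⁺ := a − (‖G(a)‖²/‖u‖²) u. Then ‖x⁺ − x_*‖² ≤ (1 − (1 − 2η)/((1 + η²) K²)) ‖a − x_*‖². -/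
open scoped RealInnerProductSpace

/-- One-step contraction of the momentum-free average block nonlinear Kaczmarz
step with adaptive (extrapolated) step size (ABNK2):
`‖x⁺ - x⋆‖² ≤ (1 - (1 - 2η)/((1 + η²) K²)) ‖a - x⋆‖²`. -/
theorem stmt14 {n m : ℕ}
    (G : EuclideanSpace ℝ (Fin n) → EuclideanSpace ℝ (Fin m))
    (a : EuclideanSpace ℝ (Fin n))
    (A : EuclideanSpace ℝ (Fin n) →L[ℝ] EuclideanSpace ℝ (Fin m))
    (hA : HasFDerivAt G A a)
    (xstar : EuclideanSpace ℝ (Fin n)) (hxstar : G xstar = 0)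
    (η K : ℝ) (hη0 : 0 ≤ η) (hη : η < 1 / 2) (hK : 1 ≤ K)
    (σ : ℝ) (hσ : σ = ‖A‖)
    (hcone : ‖G a - A (a - xstar)‖ ≤ η * ‖G a‖)
    (hlow : ‖A (a - xstar)‖ ^ 2 / (1 + η ^ 2) ≤ ‖G a‖ ^ 2)
    (hsv : (σ ^ 2 / K ^ 2) * ‖a - xstar‖ ^ 2 ≤ ‖A (a - xstar)‖ ^ 2)
    (u : EuclideanSpace ℝ (Fin n))
    (hu : u = ContinuousLinearMap.adjoint A (G a)) (hune : u ≠ 0)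
    (xplus : EuclideanSpace ℝ (Fin n))
    (hxplus : xplus = a - (‖G a‖ ^ 2 / ‖u‖ ^ 2) • u) :
    ‖xplus - xstar‖ ^ 2 ≤
      (1 - (1 - 2 * η) / ((1 + η ^ 2) * K ^ 2)) * ‖a - xstar‖ ^ 2 := by
  have hin : inner ℝ u (a - xstar) = ‖G a‖ ^ 2 - inner ℝ (G a) (G a - A (a - xstar)) := by
    rw [hu, ContinuousLinearMap.adjoint_inner_left, inner_sub_right,
      real_inner_self_eq_norm_sq]
    ring
  have hcs := real_inner_le_norm (G a) (G a - A (a - xstar))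
  have hU : 0 < ‖u‖ ^ 2 := by positivity
  have hUle : ‖u‖ ^ 2 ≤ σ ^ 2 * ‖G a‖ ^ 2 := by
    have h1 : ‖u‖ ≤ ‖A‖ * ‖G a‖ := by
      have h := (ContinuousLinearMap.adjoint A).le_opNorm (G a)
      rw [LinearIsometryEquiv.norm_map] at h
      rw [hu]
      exact h
    rw [hσ, ← mul_pow]
    gcongr
  have hg := norm_nonneg (G a)
  have hin2 : (1 - η) * ‖G a‖ ^ 2 ≤ inner ℝ u (a - xstar) := by
    have := mul_le_mul_of_nonneg_left hcone hg
    rw [hin]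
    nlinarith
  have hexp : ‖xplus - xstar‖ ^ 2 = ‖a - xstar‖ ^ 2
      - 2 * (‖G a‖ ^ 2 / ‖u‖ ^ 2) * inner ℝ u (a - xstar) + (‖G a‖ ^ 2) ^ 2 / ‖u‖ ^ 2 := by
    have h0 : xplus - xstar = (a - xstar) - (‖G a‖ ^ 2 / ‖u‖ ^ 2) • u := by
      rw [hxplus]; abel
    rw [h0, norm_sub_sq_real, real_inner_smul_right, norm_smul, mul_pow, Real.norm_eq_abs,
      sq_abs, real_inner_comm]
    field_simp
  have ht : 0 ≤ ‖G a‖ ^ 2 / ‖u‖ ^ 2 := by positivity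
  have hK2 : 0 < K ^ 2 := by positivity
  have hη2 : 0 < 1 + η ^ 2 := by positivity
  rw [div_le_iff₀ hη2] at hlow
  rw [div_mul_eq_mul_div, div_le_iff₀ hK2] at hsv
  have hkey : ‖a - xstar‖ ^ 2 / ((1 + η ^ 2) * K ^ 2) ≤ (‖G a‖ ^ 2) ^ 2 / ‖u‖ ^ 2 := by
    rw [div_le_div_iff₀ (by positivity) hU]
    calc ‖a - xstar‖ ^ 2 * ‖u‖ ^ 2 ≤ ‖a - xstar‖ ^ 2 * (σ ^ 2 * ‖G a‖ ^ 2) := by gcongr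
      _ = (σ ^ 2 * ‖a - xstar‖ ^ 2) * ‖G a‖ ^ 2 := by ring
      _ ≤ (‖G a‖ ^ 2 * (1 + η ^ 2) * K ^ 2) * ‖G a‖ ^ 2 := by
        exact mul_le_mul_of_nonneg_right
          (hsv.trans (mul_le_mul_of_nonneg_right hlow hK2.le)) (sq_nonneg _)
      _ = _ := by ring
  have h1 := mul_le_mul_of_nonneg_left hin2 ht
  have h2 := mul_le_mul_of_nonneg_left hkey (by linarith : 0 ≤ 1 - 2 * η)
  have h3 : ‖G a‖ ^ 2 / ‖u‖ ^ 2 * ((1 - η) * ‖G a‖ ^ 2)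
      = (1 - η) * ((‖G a‖ ^ 2) ^ 2 / ‖u‖ ^ 2) := by ring
  have h4 : (1 - (1 - 2 * η) / ((1 + η ^ 2) * K ^ 2)) * ‖a - xstar‖ ^ 2
      = ‖a - xstar‖ ^ 2 - (1 - 2 * η) * (‖a - xstar‖ ^ 2 / ((1 + η ^ 2) * K ^ 2)) := by ring
  rw [hexp, h4]
  linarith
end
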